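/- If finite simple graphs G and H satisfy G ≅_{S+} H, then the adjacency matrices of G and H have the same characteristic polynomial (G and H are cospectral), and the adjacency matrices of their complement graphs also have the same characteristic polynomial. -/

import Mathlib

open Matrix BigOperators

/-- `rel(g,g') = rel(h,h')`. -/
def relEq {α β : Type*} (G : SimpleGraph α) (H : SimpleGraph β)
    (g g' : α) (h h' : β) : Prop :=
  (g = g' ↔ h = h') ∧ (G.Adj g g' ↔ H.Adj h h')

/-- `M` satisfies the linear constraints of an isomorphism matrix for `G` to `H`. -/
def IsIsoMatrix {α β : Type*} [Fintype α] [Fintype β]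
    (G : SimpleGraph α) (H : SimpleGraph β)
    (M : Matrix (α × β) (α × β) ℝ) : Prop :=
  (∀ g g' : α, ∑ h : β, ∑ h' : β, M (g, h) (g', h') = 1) ∧
  (∀ h h' : β, ∑ g : α, ∑ g' : α, M (g, h) (g', h') = 1) ∧
  (∀ g g' h h', ¬ relEq G H g g' h h' → M (g, h) (g', h') = 0)

/-!
Read `M` as the Choi matrix of a linear map `Φ` from matrices on `α` to matrices on `β`. Positivity
of `M` makes `Φ` positive, and the linear constraints make it unital and trace preserving and give
`Φ A = B` and `tr A² = tr B²`, where `A` and `B` are the adjacency matrices of `G` and `H`, or of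
their complements.

After diagonalizing `A` and `B`, such a map turns the eigenvalues `l` of `A` into the eigenvalues
`m` of `B` through a doubly stochastic array `D`, that is, `m j = ∑ i, l i * D i j`. Then
`∑ D i j * (l i - m j) ^ 2 = ∑ l i ^ 2 - ∑ m j ^ 2 = 0`, so `D` is supported where `l i = m j`,
and hence couples the two spectra with multiplicity.
-/

section Coupling

variable {ι κ R τ : Type*} [Fintype ι] [Fintype κ]

lemma sum_sum_mul_sub_vecMul_sq [CommRing R] {D : Matrix ι κ R} (hrow : D *ᵥ 1 = 1)
    (hcol : 1 ᵥ* D = 1) (l : ι → R) :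
    ∑ i, ∑ j, D i j * (l i - (l ᵥ* D) j) ^ 2 = l ⬝ᵥ l - l ᵥ* D ⬝ᵥ l ᵥ* D := by
  set m := l ᵥ* D with hm
  have hl_sq : ∑ i, ∑ j, D i j * l i ^ 2 = l ⬝ᵥ l := by
    have hrow_sum : ∀ i, ∑ j, D i j = 1 := fun i => by
      simpa [mulVec, dotProduct] using congrFun hrow i
    simp only [← Finset.sum_mul, hrow_sum, one_mul, dotProduct, sq]
  have hm_sq : ∑ i, ∑ j, D i j * m j ^ 2 = m ⬝ᵥ m := by
    have hcol_sum : ∀ j, ∑ i, D i j = 1 := fun j => by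
      simpa [vecMul, dotProduct] using congrFun hcol j
    rw [Finset.sum_comm]
    simp only [← Finset.sum_mul, hcol_sum, one_mul, dotProduct, sq]
  have hcross : ∑ i, ∑ j, D i j * (l i * m j) = m ⬝ᵥ m := by
    rw [Finset.sum_comm]
    nth_rw 2 [hm]
    simp only [dotProduct, vecMul, Finset.sum_mul]
    exact Finset.sum_congr rfl fun j _ => Finset.sum_congr rfl fun i _ => by ring
  calc ∑ i, ∑ j, D i j * (l i - m j) ^ 2
      = ∑ i, ∑ j, (D i j * l i ^ 2 + D i j * m j ^ 2 - 2 * (D i j * (l i * m j))) :=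
        Finset.sum_congr rfl fun i _ => Finset.sum_congr rfl fun j _ => by ring
    _ = l ⬝ᵥ l + m ⬝ᵥ m - 2 * (m ⬝ᵥ m) := by
        simp only [Finset.sum_sub_distrib, Finset.sum_add_distrib, ← Finset.mul_sum, hl_sq, hm_sq,
          hcross]
    _ = l ⬝ᵥ l - m ⬝ᵥ m := by ring

lemma eq_vecMul_of_dotProduct_self_eq [CommRing R] [LinearOrder R] [IsStrictOrderedRing R]
    {D : Matrix ι κ R} (hD : ∀ i j, 0 ≤ D i j) (hrow : D *ᵥ 1 = 1) (hcol : 1 ᵥ* D = 1)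
    {l : ι → R} (hl : l ⬝ᵥ l = l ᵥ* D ⬝ᵥ l ᵥ* D) {i : ι} {j : κ} (hij : D i j ≠ 0) :
    l i = (l ᵥ* D) j := by
  have hterm : ∀ i j, 0 ≤ D i j * (l i - (l ᵥ* D) j) ^ 2 :=
    fun i j => mul_nonneg (hD i j) (sq_nonneg _)
  have hsum : ∑ i, ∑ j, D i j * (l i - (l ᵥ* D) j) ^ 2 = 0 := by
    rw [sum_sum_mul_sub_vecMul_sq hrow hcol, hl, sub_self]
  have hinner := (Fintype.sum_eq_zero_iff_of_nonneg
    fun i => Finset.sum_nonneg fun j _ => hterm i j).1 hsum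
  have hzero := congrFun ((Fintype.sum_eq_zero_iff_of_nonneg (hterm i)).1 (congrFun hinner i)) j
  exact sub_eq_zero.1 (pow_eq_zero_iff two_ne_zero |>.1 ((mul_eq_zero.1 hzero).resolve_left hij))

lemma sum_comp_eq_of_coupling [Semiring R] {D : Matrix ι κ R} (hrow : D *ᵥ 1 = 1)
    (hcol : 1 ᵥ* D = 1) {l : ι → τ} {m : κ → τ} (hsupp : ∀ i j, D i j ≠ 0 → l i = m j)
    (f : τ → R) : ∑ i, f (l i) = ∑ j, f (m j) := by
  have hvec : (f ∘ l) ᵥ* D = (fun j => f (m j) * (1 ᵥ* D) j) := by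
    ext j
    simp only [vecMul, dotProduct, Finset.mul_sum, Function.comp_apply, Pi.one_apply, one_mul]
    refine Finset.sum_congr rfl fun i _ => ?_
    by_cases hij : D i j = 0
    · simp [hij]
    · rw [hsupp i j hij]
  calc ∑ i, f (l i) = (f ∘ l) ⬝ᵥ D *ᵥ 1 := by rw [hrow, dotProduct_one]; rfl
    _ = (f ∘ l) ᵥ* D ⬝ᵥ 1 := dotProduct_mulVec _ _ _
    _ = ∑ j, f (m j) := by simp [hvec, hcol, dotProduct_one]

lemma map_univ_eq_of_coupling [Semiring R] [CharZero R] {D : Matrix ι κ R}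
    (hrow : D *ᵥ 1 = 1) (hcol : 1 ᵥ* D = 1) {l : ι → τ} {m : κ → τ}
    (hsupp : ∀ i j, D i j ≠ 0 → l i = m j) :
    Finset.univ.val.map l = Finset.univ.val.map m := by
  classical
  ext t
  have hcount := sum_comp_eq_of_coupling hrow hcol hsupp fun s => if t = s then 1 else 0
  simp only [Finset.sum_boole, Nat.cast_inj] at hcount
  simpa only [Multiset.count_map, Finset.card_def, Finset.filter_val] using hcount

end Coupling

section DoublyStochasticMap

open scoped ComplexOrder
open Unitary (conjStarAlgAut)

variable {α β γ 𝕜 : Type*} [Fintype α] [DecidableEq α] [RCLike 𝕜]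

/-- The transition weights from diagonal entry `i` to diagonal entry `j` under `Φ`. They are
real for positive `Φ`, so taking real parts loses nothing. -/
def diagWeights (Φ : Matrix α α 𝕜 →ₗ[𝕜] Matrix β β 𝕜) : Matrix α β ℝ :=
  of fun i j => RCLike.re (Φ (single i i 1) j j)

lemma vecMul_diagWeights (Φ : Matrix α α 𝕜 →ₗ[𝕜] Matrix β β 𝕜) (d : α → ℝ) (j : β) :
    (d ᵥ* diagWeights Φ) j = RCLike.re (Φ (diagonal (RCLike.ofReal ∘ d)) j j) := by
  have hdiag : diagonal (RCLike.ofReal ∘ d : α → 𝕜) = ∑ i, (d i : 𝕜) • single i i 1 := by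
    simp only [smul_single, smul_eq_mul, mul_one, sum_single_eq_diagonal, Function.comp_def]
  simp only [hdiag, map_sum, map_smul, Matrix.sum_apply, Matrix.smul_apply, smul_eq_mul,
    RCLike.re_ofReal_mul]
  rfl

variable [Fintype β] [DecidableEq β] [Fintype γ] [DecidableEq γ]

/-- Doubly stochastic maps between matrix algebras: positive, unital and trace preserving. -/
structure IsDoublyStochasticMap (Φ : Matrix α α 𝕜 →ₗ[𝕜] Matrix β β 𝕜) : Prop where
  map_posSemidef : ∀ X, X.PosSemidef → (Φ X).PosSemidef
  map_one : Φ 1 = 1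
  trace_map : ∀ X, (Φ X).trace = X.trace

lemma isDoublyStochasticMap_conjStarAlgAut (U : unitaryGroup α 𝕜) :
    IsDoublyStochasticMap (conjStarAlgAut 𝕜 (Matrix α α 𝕜) U).toAlgEquiv.toLinearMap where
  map_posSemidef _ hX := hX.mul_mul_conjTranspose_same U.1
  map_one := map_one (conjStarAlgAut 𝕜 (Matrix α α 𝕜) U)
  trace_map X := by
    change trace (U.1 * X * star U.1) = trace X
    rw [trace_mul_cycle, Unitary.coe_star_mul_self, one_mul]

namespace IsDoublyStochasticMap

variable {Φ : Matrix α α 𝕜 →ₗ[𝕜] Matrix β β 𝕜}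

lemma comp {Ψ : Matrix β β 𝕜 →ₗ[𝕜] Matrix γ γ 𝕜} (hΨ : IsDoublyStochasticMap Ψ)
    (hΦ : IsDoublyStochasticMap Φ) : IsDoublyStochasticMap (Ψ ∘ₗ Φ) where
  map_posSemidef X hX := hΨ.map_posSemidef _ (hΦ.map_posSemidef X hX)
  map_one := by rw [LinearMap.comp_apply, hΦ.map_one, hΨ.map_one]
  trace_map X := by rw [LinearMap.comp_apply, hΨ.trace_map, hΦ.trace_map]

lemma diagWeights_nonneg (hΦ : IsDoublyStochasticMap Φ) (i : α) (j : β) :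
    0 ≤ diagWeights Φ i j := by
  have hsingle : (single i i (1 : 𝕜)).PosSemidef := by
    rw [← diagonal_single]
    exact .diagonal (Pi.single_nonneg.2 zero_le_one)
  exact (RCLike.nonneg_iff.1 (hΦ.map_posSemidef _ hsingle).diag_nonneg).1

lemma diagWeights_mulVec_one (hΦ : IsDoublyStochasticMap Φ) : diagWeights Φ *ᵥ 1 = 1 := by
  ext i
  have htrace := congrArg RCLike.re (hΦ.trace_map (single i i 1))
  simpa [diagWeights, mulVec, dotProduct, trace] using htrace

lemma one_vecMul_diagWeights (hΦ : IsDoublyStochasticMap Φ) : 1 ᵥ* diagWeights Φ = 1 := by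
  ext j
  simp [vecMul_diagWeights, hΦ.map_one]

lemma map_univ_eq_of_diagonal (hΦ : IsDoublyStochasticMap Φ) {l : α → ℝ} {m : β → ℝ}
    (hlm : Φ (diagonal (RCLike.ofReal ∘ l)) = diagonal (RCLike.ofReal ∘ m))
    (hsq : l ⬝ᵥ l = m ⬝ᵥ m) :
    Finset.univ.val.map l = Finset.univ.val.map m := by
  obtain rfl : l ᵥ* diagWeights Φ = m := by
    ext j
    simp [vecMul_diagWeights, hlm]
  exact map_univ_eq_of_coupling hΦ.diagWeights_mulVec_one hΦ.one_vecMul_diagWeights fun _ _ =>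
    eq_vecMul_of_dotProduct_self_eq hΦ.diagWeights_nonneg hΦ.diagWeights_mulVec_one
      hΦ.one_vecMul_diagWeights hsq

end IsDoublyStochasticMap

lemma trace_mul_self_eq_dotProduct_eigenvalues {A : Matrix α α 𝕜} (hA : A.IsHermitian) :
    (A * A).trace = ((hA.eigenvalues ⬝ᵥ hA.eigenvalues : ℝ) : 𝕜) := by
  set Λ : Matrix α α 𝕜 := diagonal (RCLike.ofReal ∘ hA.eigenvalues)
  calc (A * A).trace = (conjStarAlgAut 𝕜 _ hA.eigenvectorUnitary (Λ * Λ)).trace := by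
        rw [map_mul, ← hA.spectral_theorem]
    _ = (Λ * Λ).trace :=
        (isDoublyStochasticMap_conjStarAlgAut hA.eigenvectorUnitary).trace_map (Λ * Λ)
    _ = _ := by simp [Λ, dotProduct]

lemma charpoly_eq_of_map_eigenvalues_eq {A : Matrix α α 𝕜} {B : Matrix β β 𝕜}
    (hA : A.IsHermitian) (hB : B.IsHermitian)
    (hAB : Finset.univ.val.map hA.eigenvalues = Finset.univ.val.map hB.eigenvalues) :
    A.charpoly = B.charpoly := by
  have hfactors := congrArg
    (fun s => (s.map fun t : ℝ => Polynomial.X - Polynomial.C (t : 𝕜)).prod) hAB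
  simp only [Multiset.map_map] at hfactors
  rw [hA.charpoly_eq, hB.charpoly_eq]
  exact hfactors

theorem IsDoublyStochasticMap.charpoly_eq {Φ : Matrix α α 𝕜 →ₗ[𝕜] Matrix β β 𝕜}
    (hΦ : IsDoublyStochasticMap Φ) {A : Matrix α α 𝕜} {B : Matrix β β 𝕜}
    (hA : A.IsHermitian) (hB : B.IsHermitian) (hAB : Φ A = B)
    (htrace : (A * A).trace = (B * B).trace) : A.charpoly = B.charpoly := by
  have hconj := ((isDoublyStochasticMap_conjStarAlgAut (star hB.eigenvectorUnitary)).comp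
    hΦ).comp (isDoublyStochasticMap_conjStarAlgAut hA.eigenvectorUnitary)
  refine charpoly_eq_of_map_eigenvalues_eq hA hB (hconj.map_univ_eq_of_diagonal ?_ ?_)
  · change conjStarAlgAut 𝕜 _ (star hB.eigenvectorUnitary) (Φ (conjStarAlgAut 𝕜 _
      hA.eigenvectorUnitary (diagonal (RCLike.ofReal ∘ hA.eigenvalues)))) = _
    rw [← hA.spectral_theorem, hAB, hB.conjStarAlgAut_star_eigenvectorUnitary]
  · rw [trace_mul_self_eq_dotProduct_eigenvalues hA,
      trace_mul_self_eq_dotProduct_eigenvalues hB] at htrace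
    exact RCLike.ofReal_injective htrace

end DoublyStochasticMap

section ChoiMap

variable {α β R S : Type*}

/-- The linear map between matrix algebras whose Choi matrix is `M`: the block of `M` at rows
`(g, ·)` and columns `(g', ·)` is the image of the matrix unit at `(g, g')`. -/
def choiMap [Fintype α] [CommSemiring R] (M : Matrix (α × β) (α × β) R) :
    Matrix α α R →ₗ[R] Matrix β β R where
  toFun X := of fun h h' => ∑ g, ∑ g', M (g, h) (g', h') * X g g'
  map_add' X Y := by
    ext
    simp [mul_add, Finset.sum_add_distrib]
  map_smul' c X := by
    ext
    simp [Finset.mul_sum, mul_left_comm]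

lemma choiMap_apply [Fintype α] [CommSemiring R] (M : Matrix (α × β) (α × β) R)
    (X : Matrix α α R) (h h' : β) :
    choiMap M X h h' = ∑ g, ∑ g', M (g, h) (g', h') * X g g' :=
  rfl

open scoped ComplexOrder in
theorem posSemidef_choiMap {𝕜 : Type*} [RCLike 𝕜] [Fintype α] [Finite β]
    {M : Matrix (α × β) (α × β) 𝕜} (hM : M.PosSemidef) {X : Matrix α α 𝕜} (hX : X.PosSemidef) :
    (choiMap M X).PosSemidef := by
  classical
  cases nonempty_fintype β
  let C : Matrix (α × β) β 𝕜 := (1 : Matrix β β 𝕜).submatrix Prod.snd id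
  have hcompress : choiMap M X = Cᴴ * (M ⊙ X.submatrix Prod.fst Prod.fst) * C := by
    ext h h'
    simp only [choiMap_apply, C, mul_apply, conjTranspose_apply, submatrix_apply, one_apply,
      id_eq, hadamard_apply, Fintype.sum_prod_type, apply_ite star, star_one, star_zero,
      ite_mul, mul_ite, one_mul, mul_one, zero_mul, mul_zero, Finset.sum_ite_eq',
      Finset.mem_univ, if_true]
    exact Finset.sum_comm
  rw [hcompress]
  exact (hM.hadamard (hX.submatrix Prod.fst)).conjTranspose_mul_mul_same C

/-- `X` and `Y` have equal entries at every pair of positions linked by a nonzero entry of `M`; with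
suitably normalized `M`, this makes `choiMap M` send `X` to `Y`. -/
def AgreeOnSupport [Zero R] (M : Matrix (α × β) (α × β) R) (X : Matrix α α S)
    (Y : Matrix β β S) : Prop :=
  ∀ g g' h h', M (g, h) (g', h') ≠ 0 → X g g' = Y h h'

namespace AgreeOnSupport

variable [CommSemiring R] {M : Matrix (α × β) (α × β) R} {X : Matrix α α R} {Y : Matrix β β R}

lemma mul_eq_mul (hXY : AgreeOnSupport M X Y) (g g' : α) (h h' : β) :
    M (g, h) (g', h') * X g g' = M (g, h) (g', h') * Y h h' := by
  by_cases hM : M (g, h) (g', h') = 0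
  · rw [hM, zero_mul, zero_mul]
  · rw [hXY g g' h h' hM]

lemma choiMap_eq [Fintype α] (hXY : AgreeOnSupport M X Y)
    (hM : ∀ h h', ∑ g, ∑ g', M (g, h) (g', h') = 1) : choiMap M X = Y := by
  ext h h'
  simp only [choiMap_apply, hXY.mul_eq_mul, ← Finset.sum_mul, hM, one_mul]

lemma trace_choiMap_mul_transpose [Fintype α] [Fintype β] (hXY : AgreeOnSupport M X Y)
    (hM : ∀ g g', ∑ h, ∑ h', M (g, h) (g', h') = 1) (Z : Matrix α α R) :
    (choiMap M Z * Yᵀ).trace = (Z * Xᵀ).trace := by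
  have hpairs : (∑ h, ∑ h', ∑ g, ∑ g', M (g, h) (g', h') * Z g g' * Y h h') =
      ∑ g, ∑ g', ∑ h, ∑ h', M (g, h) (g', h') * Z g g' * Y h h' := by
    simpa only [Fintype.sum_prod_type] using
      Finset.sum_comm (s := (Finset.univ : Finset (β × β))) (t := (Finset.univ : Finset (α × α)))
        (f := fun p q => M (q.1, p.1) (q.2, p.2) * Z q.1 q.2 * Y p.1 p.2)
  calc (choiMap M Z * Yᵀ).trace
      = ∑ h, ∑ h', ∑ g, ∑ g', M (g, h) (g', h') * Z g g' * Y h h' := by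
        simp only [← sum_hadamard_eq, hadamard_apply, choiMap_apply, Finset.sum_mul]
    _ = ∑ g, ∑ g', ∑ h, ∑ h', M (g, h) (g', h') * (Z g g' * X g g') := by
        rw [hpairs]
        simp only [mul_right_comm _ (Z _ _), ← hXY.mul_eq_mul, mul_assoc, mul_comm (X _ _)]
    _ = (Z * Xᵀ).trace := by
        simp only [← Finset.sum_mul, hM, one_mul, ← sum_hadamard_eq, hadamard_apply]

end AgreeOnSupport

end ChoiMap

namespace IsIsoMatrix

variable {α β S : Type*} [Fintype α] [Fintype β] {G : SimpleGraph α} {H : SimpleGraph β}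
  {M : Matrix (α × β) (α × β) ℝ}

lemma agreeOnSupport (hM : IsIsoMatrix G H M) {X : Matrix α α S} {Y : Matrix β β S}
    (hXY : ∀ g g' h h', relEq G H g g' h h' → X g g' = Y h h') : AgreeOnSupport M X Y :=
  fun g g' h h' hne => hXY g g' h h' (not_not.1 (mt (hM.2.2 g g' h h') hne))

lemma agreeOnSupport_adjMatrix [DecidableRel G.Adj] [DecidableRel H.Adj]
    (hM : IsIsoMatrix G H M) : AgreeOnSupport M (G.adjMatrix ℝ) (H.adjMatrix ℝ) :=
  hM.agreeOnSupport fun g g' h h' hrel => by simp only [SimpleGraph.adjMatrix_apply, hrel.2]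

lemma compl (hM : IsIsoMatrix G H M) : IsIsoMatrix Gᶜ Hᶜ M :=
  ⟨hM.1, hM.2.1, fun g g' h h' hrel => hM.2.2 g g' h h' fun ⟨heq, hadj⟩ =>
    hrel ⟨heq, by simp only [SimpleGraph.compl_adj, ne_eq, heq, hadj]⟩⟩

variable [DecidableEq α] [DecidableEq β]

lemma agreeOnSupport_one (hM : IsIsoMatrix G H M) :
    AgreeOnSupport M (1 : Matrix α α ℝ) (1 : Matrix β β ℝ) :=
  hM.agreeOnSupport fun g g' h h' hrel => by simp only [one_apply, hrel.1]

lemma isDoublyStochasticMap_choiMap (hM : IsIsoMatrix G H M) (hpos : M.PosSemidef) :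
    IsDoublyStochasticMap (choiMap M) where
  map_posSemidef _ hX := posSemidef_choiMap hpos hX
  map_one := hM.agreeOnSupport_one.choiMap_eq hM.2.1
  trace_map X := by
    simpa using hM.agreeOnSupport_one.trace_choiMap_mul_transpose hM.1 X

theorem charpoly_adjMatrix_eq [DecidableRel G.Adj] [DecidableRel H.Adj]
    (hM : IsIsoMatrix G H M) (hpos : M.PosSemidef) :
    (G.adjMatrix ℝ).charpoly = (H.adjMatrix ℝ).charpoly := by
  have hmap := hM.agreeOnSupport_adjMatrix.choiMap_eq hM.2.1
  have htrace := hM.agreeOnSupport_adjMatrix.trace_choiMap_mul_transpose hM.1 (G.adjMatrix ℝ)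
  rw [hmap, G.transpose_adjMatrix, H.transpose_adjMatrix] at htrace
  exact (hM.isDoublyStochasticMap_choiMap hpos).charpoly_eq (G.isHermitian_adjMatrix ℝ)
    (H.isHermitian_adjMatrix ℝ) hmap htrace.symm

end IsIsoMatrix

/-- If `G ≅_{S+} H`, then `G` and `H` are cospectral, as are their complements. -/
theorem cospectral_of_sPlus_iso {α β : Type*}
    [Fintype α] [Fintype β] [DecidableEq α] [DecidableEq β]
    (G : SimpleGraph α) (H : SimpleGraph β)
    [DecidableRel G.Adj] [DecidableRel H.Adj]
    (h : ∃ M, IsIsoMatrix G H M ∧ M.PosSemidef) :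
    (G.adjMatrix ℝ).charpoly = (H.adjMatrix ℝ).charpoly ∧
    (Gᶜ.adjMatrix ℝ).charpoly = (Hᶜ.adjMatrix ℝ).charpoly := by
  obtain ⟨M, hM, hpos⟩ := h
  exact ⟨hM.charpoly_adjMatrix_eq hpos, hM.compl.charpoly_adjMatrix_eq hpos⟩
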